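/- (Return gap from policy shift, same dynamics.) Let P be a dynamics, π₁ and π₂ two policies, and ε_π := sup_{s∈S} D_TV(π₁(·|s), π₂(·|s)). Then the gap between the two returns under the same dynamics P satisfies |J_P(π₁) − J_P(π₂)| ≤ 2·R_max·ε_π/(1−γ)². -/

import Mathlib

open scoped ENNReal

noncomputable section

/-- Total variation distance between two probability mass functions on a countable type:
`D_TV(p, q) = (1/2) * Σ_x |p(x) - q(x)|`. -/
def tv {X : Type*} (p q : PMF X) : ℝ :=
  (1 / 2) * ∑' x : X, |(p x).toReal - (q x).toReal|

/-- The state-action distribution at time `t` under initial distribution `ρ0`, policy `π`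
and dynamics `P`:  `ν_0(s,a) = ρ0(s)·π(a|s)` and
`ν_{t+1}(s',a') = Σ_{s,a} ν_t(s,a)·P(s'|s,a)·π(a'|s')`. -/
def nu {S A : Type*} (ρ0 : PMF S) (π : S → PMF A) (P : S × A → PMF S) : ℕ → PMF (S × A)
  | 0 => ρ0.bind fun s => (π s).map fun a => (s, a)
  | (t + 1) => (nu ρ0 π P t).bind fun sa =>
      (P sa).bind fun s' => (π s').map fun a' => (s', a')

/-- The discounted return `J_P(π) = Σ_{t=0}^∞ γ^t · E_{(s,a)∼ν_t^{π,P}}[R(s,a)]`. -/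
def J {S A : Type*} (R : S × A → ℝ) (γ : ℝ) (ρ0 : PMF S) (π : S → PMF A)
    (P : S × A → PMF S) : ℝ :=
  ∑' t : ℕ, γ ^ t * ∑' sa : S × A, ((nu ρ0 π P t) sa).toReal * R sa

/-! Distributions are compared through the expectations of bounded functions. One transition under
a policy `π` turns the expectation of `h` under `ν_{t+1}` into the expectation under `ν_t` of the
function `(s, a) ↦ E_{s' ∼ P(s, a)} E_{a' ∼ π(s')} h(s', a')`, which obeys the same bound `M` as
`h`. Replacing `π₁` by `π₂` in this function changes it by at most `2Mε`, so each time step adds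
`2Mε` to the gap between the two expectations. With `M = R_max`, the expected rewards at time `t`
thus differ by at most `2(t + 1)Mε`, and `∑ (t + 1) γ^t = 1 / (1 - γ)^2`. -/

section Expectation

variable {X Y : Type*}

/-- The expectation of the real-valued function `f` under `p`, as a real series over the whole type.
As for every `tsum`, it is `0` when the series does not converge absolutely. -/
def expectation (p : PMF X) (f : X → ℝ) : ℝ :=
  ∑' x, (p x).toReal * f x

lemma hasSum_toReal_pmf (p : PMF X) : HasSum (fun x => (p x).toReal) 1 := by
  have sum_mass := ENNReal.hasSum_toReal p.tsum_coe_ne_top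
  rwa [← ENNReal.tsum_toReal_eq p.apply_ne_top, p.tsum_coe, ENNReal.toReal_one] at sum_mass

lemma norm_toReal_mul_le {M r : ℝ} (hr : |r| ≤ M) (w : ℝ≥0∞) :
    ‖w.toReal * r‖ ≤ w.toReal * M := by
  rw [Real.norm_eq_abs, abs_mul, abs_of_nonneg ENNReal.toReal_nonneg]
  exact mul_le_mul_of_nonneg_left hr ENNReal.toReal_nonneg

lemma summable_toReal_mul {w : X → ℝ≥0∞} (hw : ∑' x, w x ≠ ∞) {f : X → ℝ} {M : ℝ}
    (hf : ∀ x, |f x| ≤ M) : Summable fun x => (w x).toReal * f x :=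
  .of_norm_bounded ((ENNReal.summable_toReal hw).mul_right M) fun x => norm_toReal_mul_le (hf x) _

lemma abs_expectation_le (p : PMF X) {f : X → ℝ} {M : ℝ} (hf : ∀ x, |f x| ≤ M) :
    |expectation p f| ≤ M := by
  have weighted_bound := tsum_of_norm_bounded ((hasSum_toReal_pmf p).mul_right M)
    fun x => norm_toReal_mul_le (hf x) (p x)
  rwa [one_mul] at weighted_bound

lemma expectation_sub (p : PMF X) {f g : X → ℝ} {M N : ℝ} (hf : ∀ x, |f x| ≤ M)
    (hg : ∀ x, |g x| ≤ N) :
    expectation p (fun x => f x - g x) = expectation p f - expectation p g := by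
  simp only [expectation, mul_sub]
  exact (summable_toReal_mul p.tsum_coe_ne_top hf).tsum_sub
    (summable_toReal_mul p.tsum_coe_ne_top hg)

lemma expectation_pure (x : X) (f : X → ℝ) : expectation (PMF.pure x) f = f x := by
  rw [expectation, tsum_eq_single x fun y hy => by simp [hy]]
  simp

lemma toReal_bind_apply (p : PMF X) (k : X → PMF Y) (y : Y) :
    (p.bind k y).toReal = ∑' x, (p x).toReal * (k x y).toReal := by
  rw [PMF.bind_apply, ENNReal.tsum_toReal_eq fun x =>
    ENNReal.mul_ne_top (p.apply_ne_top x) ((k x).apply_ne_top y)]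
  simp only [ENNReal.toReal_mul]

lemma expectation_bind (p : PMF X) (k : X → PMF Y) {f : Y → ℝ} {M : ℝ} (hf : ∀ y, |f y| ≤ M) :
    expectation (p.bind k) f = expectation p fun x => expectation (k x) f := by
  have joint_mass : ∑' z : X × Y, p z.1 * k z.1 z.2 = 1 := by
    rw [ENNReal.tsum_prod (f := fun x y => p x * k x y)]
    simp only [ENNReal.tsum_mul_left, PMF.tsum_coe, mul_one]
  have joint_summable :
      Summable (Function.uncurry fun x y => (p x).toReal * ((k x y).toReal * f y)) :=
    (summable_toReal_mul (joint_mass ▸ ENNReal.one_ne_top) fun z : X × Y => hf z.2).congr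
      fun z => by rw [ENNReal.toReal_mul, mul_assoc]; rfl
  simp only [expectation, toReal_bind_apply, ← tsum_mul_right, ← tsum_mul_left, mul_assoc]
  exact joint_summable.tsum_comm

lemma expectation_map (p : PMF X) (g : X → Y) {f : Y → ℝ} {M : ℝ} (hf : ∀ y, |f y| ≤ M) :
    expectation (p.map g) f = expectation p fun x => f (g x) := by
  simp only [PMF.map, expectation_bind _ _ hf, Function.comp_apply, expectation_pure]

lemma tv_le_one (p q : PMF X) : tv p q ≤ 1 := by
  have hp := hasSum_toReal_pmf p
  have hq := hasSum_toReal_pmf q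
  have l1_le : ∑' x, |(p x).toReal - (q x).toReal| ≤ 1 + 1 :=
    hasSum_le (fun x => by simpa using norm_sub_le (p x).toReal (q x).toReal)
      (hp.summable.sub hq.summable).abs.hasSum (hp.add hq)
  rw [tv]
  linarith

lemma tv_le_iSup {ι : Type*} (p q : ι → PMF X) (i : ι) : tv (p i) (q i) ≤ ⨆ j, tv (p j) (q j) :=
  le_ciSup (f := fun j => tv (p j) (q j))
    ⟨1, Set.forall_mem_range.2 fun j => tv_le_one (p j) (q j)⟩ i

lemma abs_expectation_sub_expectation_le (p q : PMF X) {f : X → ℝ} {M : ℝ}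
    (hf : ∀ x, |f x| ≤ M) :
    |expectation p f - expectation q f| ≤ 2 * M * tv p q := by
  have l1_summable : Summable fun x => |(p x).toReal - (q x).toReal| :=
    ((hasSum_toReal_pmf p).summable.sub (hasSum_toReal_pmf q).summable).abs
  rw [expectation, expectation, ← (summable_toReal_mul p.tsum_coe_ne_top hf).tsum_sub
    (summable_toReal_mul q.tsum_coe_ne_top hf)]
  calc |∑' x, ((p x).toReal * f x - (q x).toReal * f x)|
      ≤ (∑' x, |(p x).toReal - (q x).toReal|) * M :=
        tsum_of_norm_bounded (E := ℝ) (l1_summable.hasSum.mul_right M) fun x => by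
          rw [Real.norm_eq_abs, ← sub_mul, abs_mul]
          exact mul_le_mul_of_nonneg_left (hf x) (abs_nonneg _)
    _ = 2 * M * tv p q := by rw [tv]; ring

end Expectation

section PolicyShift

variable {S A : Type*}

/-- The joint law of a state `s ∼ ρ` and an action `a ∼ π s`: every state-action distribution `nu`
arises in this way from the law of the state at the same time. -/
def stateActionLaw (ρ : PMF S) (π : S → PMF A) : PMF (S × A) :=
  ρ.bind fun s => (π s).map fun a => (s, a)

lemma nu_zero (ρ0 : PMF S) (π : S → PMF A) (P : S × A → PMF S) :
    nu ρ0 π P 0 = stateActionLaw ρ0 π := rfl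

lemma nu_succ (ρ0 : PMF S) (π : S → PMF A) (P : S × A → PMF S) (t : ℕ) :
    nu ρ0 π P (t + 1) = stateActionLaw ((nu ρ0 π P t).bind P) π :=
  (PMF.bind_bind _ _ _).symm

lemma expectation_stateActionLaw (ρ : PMF S) (π : S → PMF A) {h : S × A → ℝ} {M : ℝ}
    (hh : ∀ sa, |h sa| ≤ M) :
    expectation (stateActionLaw ρ π) h =
      expectation ρ fun s => expectation (π s) fun a => h (s, a) := by
  simp only [stateActionLaw, expectation_bind _ _ hh, expectation_map _ _ hh]

variable {π₁ π₂ : S → PMF A} {ε : ℝ}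

lemma abs_expectation_stateActionLaw_sub_le (hε : ∀ s, tv (π₁ s) (π₂ s) ≤ ε) (ρ : PMF S)
    {h : S × A → ℝ} {M : ℝ} (hh : ∀ sa, |h sa| ≤ M) :
    |expectation (stateActionLaw ρ π₁) h - expectation (stateActionLaw ρ π₂) h| ≤ 2 * M * ε := by
  have hM : 0 ≤ M := (abs_nonneg _).trans (abs_expectation_le (stateActionLaw ρ π₁) hh)
  rw [expectation_stateActionLaw ρ π₁ hh, expectation_stateActionLaw ρ π₂ hh,
    ← expectation_sub ρ (fun s => abs_expectation_le (π₁ s) fun a => hh (s, a))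
      (fun s => abs_expectation_le (π₂ s) fun a => hh (s, a))]
  refine abs_expectation_le ρ fun s => ?_
  calc |expectation (π₁ s) (fun a => h (s, a)) - expectation (π₂ s) (fun a => h (s, a))|
      ≤ 2 * M * tv (π₁ s) (π₂ s) :=
        abs_expectation_sub_expectation_le _ _ fun a => hh (s, a)
    _ ≤ 2 * M * ε := by gcongr; exact hε s

lemma abs_expectation_nu_sub_le (hε : ∀ s, tv (π₁ s) (π₂ s) ≤ ε) (ρ0 : PMF S)
    (P : S × A → PMF S) (t : ℕ) {h : S × A → ℝ} {M : ℝ} (hh : ∀ sa, |h sa| ≤ M) :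
    |expectation (nu ρ0 π₁ P t) h - expectation (nu ρ0 π₂ P t) h| ≤ (t + 1) * (2 * M * ε) := by
  induction t generalizing h with
  | zero =>
    simpa only [nu_zero, Nat.cast_zero, zero_add, one_mul] using
      abs_expectation_stateActionLaw_sub_le hε ρ0 hh
  | succ t ih =>
    let ρ (π : S → PMF A) : PMF S := (nu ρ0 π P t).bind P
    have value_le (s : S) : |expectation (π₂ s) fun a => h (s, a)| ≤ M :=
      abs_expectation_le (π₂ s) fun a => hh (s, a)
    have policy_gap : |expectation (stateActionLaw (ρ π₁) π₁) h -
        expectation (stateActionLaw (ρ π₁) π₂) h| ≤ 2 * M * ε :=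
      abs_expectation_stateActionLaw_sub_le hε (ρ π₁) hh
    have state_gap : |expectation (stateActionLaw (ρ π₁) π₂) h -
        expectation (stateActionLaw (ρ π₂) π₂) h| ≤ (t + 1) * (2 * M * ε) := by
      simp only [ρ, expectation_stateActionLaw _ _ hh, expectation_bind _ _ value_le]
      exact ih fun sa => abs_expectation_le (P sa) value_le
    rw [nu_succ, nu_succ]
    push_cast
    linarith [abs_sub_le (expectation (stateActionLaw (ρ π₁) π₁) h)
      (expectation (stateActionLaw (ρ π₁) π₂) h) (expectation (stateActionLaw (ρ π₂) π₂) h)]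

end PolicyShift

section Discounting

variable {γ : ℝ} {u v : ℕ → ℝ}

lemma summable_discounted (hγ0 : 0 ≤ γ) (hγ1 : γ < 1) {M : ℝ} (hu : ∀ t, |u t| ≤ M) :
    Summable fun t => γ ^ t * u t :=
  .of_norm_bounded ((summable_geometric_of_lt_one hγ0 hγ1).mul_right M) fun t => by
    rw [Real.norm_eq_abs, abs_mul, abs_of_nonneg (pow_nonneg hγ0 t)]
    exact mul_le_mul_of_nonneg_left (hu t) (pow_nonneg hγ0 t)

lemma abs_tsum_discounted_sub_le (hγ0 : 0 ≤ γ) (hγ1 : γ < 1) (hu : Summable fun t => γ ^ t * u t)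
    (hv : Summable fun t => γ ^ t * v t) {C : ℝ} (huv : ∀ t : ℕ, |u t - v t| ≤ (t + 1) * C) :
    |∑' t, γ ^ t * u t - ∑' t, γ ^ t * v t| ≤ C / (1 - γ) ^ 2 := by
  have arith_geometric : HasSum (fun t : ℕ => ((t : ℝ) + 1) * γ ^ t) (1 / (1 - γ) ^ 2) := by
    simpa using hasSum_choose_mul_geometric_of_norm_lt_one 1
      (show ‖γ‖ < 1 by rwa [Real.norm_of_nonneg hγ0])
  rw [← hu.tsum_sub hv, div_eq_mul_one_div]
  refine tsum_of_norm_bounded (E := ℝ) (arith_geometric.mul_left C) fun t => ?_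
  calc ‖γ ^ t * u t - γ ^ t * v t‖ = γ ^ t * |u t - v t| := by
        rw [← mul_sub, Real.norm_eq_abs, abs_mul, abs_of_nonneg (pow_nonneg hγ0 t)]
    _ ≤ γ ^ t * ((t + 1) * C) := mul_le_mul_of_nonneg_left (huv t) (pow_nonneg hγ0 t)
    _ = C * ((t + 1) * γ ^ t) := by ring

end Discounting

theorem return_gap_policy_shift_general {S A : Type*}
    (P : S × A → PMF S) {π₁ π₂ : S → PMF A}
    {R : S × A → ℝ} {Rmax : ℝ} (hR : ∀ sa : S × A, |R sa| ≤ Rmax)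
    {γ : ℝ} (hγ0 : 0 ≤ γ) (hγ1 : γ < 1) (ρ0 : PMF S)
    {ε : ℝ} (hε : ∀ s, tv (π₁ s) (π₂ s) ≤ ε) :
    |J R γ ρ0 π₁ P - J R γ ρ0 π₂ P| ≤ 2 * Rmax * ε / (1 - γ) ^ 2 := by
  have return_summable (π : S → PMF A) :
      Summable fun t => γ ^ t * expectation (nu ρ0 π P t) R :=
    summable_discounted hγ0 hγ1 fun t => abs_expectation_le (nu ρ0 π P t) hR
  exact abs_tsum_discounted_sub_le hγ0 hγ1 (return_summable π₁) (return_summable π₂)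
    fun t => abs_expectation_nu_sub_le hε ρ0 P t hR

/-- **Return gap from policy shift, same dynamics.**
`|J_P(π₁) - J_P(π₂)| ≤ 2·R_max·ε_π/(1-γ)²`. -/
theorem return_gap_policy_shift {S A : Type*} [Countable S] [Countable A]
    (P : S × A → PMF S) (π₁ π₂ : S → PMF A)
    (R : S × A → ℝ) (Rmax : ℝ) (hR : ∀ sa : S × A, |R sa| ≤ Rmax)
    (γ : ℝ) (hγ0 : 0 ≤ γ) (hγ1 : γ < 1) (ρ0 : PMF S)
    (επ : ℝ) (hεπ : επ = ⨆ s : S, tv (π₁ s) (π₂ s)) :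
    |J R γ ρ0 π₁ P - J R γ ρ0 π₂ P| ≤ 2 * Rmax * επ / (1 - γ) ^ 2 :=
  return_gap_policy_shift_general P hR hγ0 hγ1 ρ0 fun s => hεπ ▸ tv_le_iSup π₁ π₂ s
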